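/- arXiv:1707.07441 — 2 statements merged into one kernel-verified Lean document; each statement's English description precedes it below -/
import Mathlib

section
/- For all n ≥ 1, the random variable X_n is monotone with respect to the lexicographic order on paths: if p and q are paths with p ≤ q, then X_n(p) ≤ X_n(q). -/
noncomputable section
open Filter Topology Classical

/-- Lexicographic strict order on infinite paths. -/
def PathLt {N : ℕ} (p q : Fin N × (ℕ → Bool)) : Prop :=
  p.1 < q.1 ∨ (p.1 = q.1 ∧ ∃ n : ℕ, (∀ k < n, p.2 k = q.2 k) ∧ p.2 n = false ∧ q.2 n = true)

/-- Lexicographic strict order on positive edges (compared within a sphere `S(n)`). -/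
def EdgeLt {N : ℕ} (e f : Fin N × List Bool) : Prop :=
  e.1 < f.1 ∨ (e.1 = f.1 ∧ List.Lex (· < ·) e.2 f.2)

/-- `Y (i, v)` for an edge of `S (m+1)`: `Y_n(e) = Φ(e)/2 + ∑_{f ∈ S(n), f < e} Φ(f)`. -/
def Y {N : ℕ} (Φ : Fin N → List Bool → ℝ) (m : ℕ) (i : Fin N) (v : Fin m → Bool) : ℝ :=
  Φ i (List.ofFn v) / 2 +
    ∑ x : Fin N × (Fin m → Bool),
      if EdgeLt (x.1, List.ofFn x.2) (i, List.ofFn v) then Φ x.1 (List.ofFn x.2) else 0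

/-- `X_n(p) = Y_n(p^n)`, where `p^n = (p.1, [p.2 0, …, p.2 (n-2)])` is the `n`-th edge
of the path `p`; here `m = n - 1` is the word length. -/
def X {N : ℕ} (Φ : Fin N → List Bool → ℝ) (m : ℕ) (p : Fin N × (ℕ → Bool)) : ℝ :=
  Y Φ m p.1 (fun k => p.2 k.val)

lemma edgeLt_trans {N : ℕ} {a b c : Fin N × List Bool} (h : EdgeLt a b) (h' : EdgeLt b c) :
    EdgeLt a c := by
  rcases h with h | ⟨h, hl⟩ <;> rcases h' with h' | ⟨h', hl'⟩
  · exact Or.inl (h.trans h')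
  · exact Or.inl (h' ▸ h)
  · exact Or.inl (h ▸ h')
  · refine Or.inr ⟨h.trans h', ?_⟩
    have h1 : a.2 < b.2 := hl
    have h2 : b.2 < c.2 := hl'
    exact (h1.trans h2 : a.2 < c.2)

lemma edgeLt_irrefl {N : ℕ} (a : Fin N × List Bool) : ¬ EdgeLt a a := by
  rintro (h | ⟨_, hl⟩)
  · exact lt_irrefl _ h
  · exact lt_irrefl a.2 hl

lemma lex_ofFn (s t : ℕ → Bool) (n m : ℕ) (hk : ∀ k < n, s k = t k) (hs : s n = false)
    (ht : t n = true) (hnm : n < m) :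
    List.Lex (· < ·) (List.ofFn (fun k : Fin m => s k.val))
      (List.ofFn (fun k : Fin m => t k.val)) := by
  induction m generalizing s t n with
  | zero => omega
  | succ m ih =>
    rw [List.ofFn_succ, List.ofFn_succ]
    cases n with
    | zero =>
      apply List.Lex.rel
      simp [hs, ht]
    | succ n =>
      have h0 : s 0 = t 0 := hk 0 (by omega)
      have := ih (fun k => s (k+1)) (fun k => t (k+1)) n
        (fun k hkn => hk (k+1) (by omega)) hs ht (by omega)
      simp only [Fin.val_zero, Fin.val_succ, h0]
      exact List.Lex.cons this

lemma Y_le_of_edgeLt {N : ℕ} (Φ : Fin N → List Bool → ℝ)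
    (hpos : ∀ (i : Fin N) (w : List Bool), 0 < Φ i w) (m : ℕ) (i j : Fin N)
    (v w : Fin m → Bool) (h : EdgeLt (i, List.ofFn v) (j, List.ofFn w)) :
    Y Φ m i v ≤ Y Φ m j w := by
  unfold Y
  have key : (∑ x : Fin N × (Fin m → Bool),
      if EdgeLt (x.1, List.ofFn x.2) (i, List.ofFn v) then Φ x.1 (List.ofFn x.2) else 0) +
      (∑ x : Fin N × (Fin m → Bool), if x = (i, v) then Φ x.1 (List.ofFn x.2) else 0) ≤
      ∑ x : Fin N × (Fin m → Bool),
      if EdgeLt (x.1, List.ofFn x.2) (j, List.ofFn w) then Φ x.1 (List.ofFn x.2) else 0 := by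
    rw [← Finset.sum_add_distrib]
    apply Finset.sum_le_sum
    intro x _
    have hp := hpos x.1 (List.ofFn x.2)
    by_cases hx : x = (i, v)
    · subst hx
      simp [edgeLt_irrefl, h]
    · by_cases h1 : EdgeLt (x.1, List.ofFn x.2) (i, List.ofFn v)
      · simp [hx, h1, edgeLt_trans h1 h]
      · simp only [hx, h1, if_false, add_zero]
        split_ifs <;> linarith
  rw [Finset.sum_ite_eq' Finset.univ (i, v)] at key
  simp only [Finset.mem_univ, if_true] at key
  have := hpos i (List.ofFn v)
  have := hpos j (List.ofFn w)
  linarith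

/-- **`X_n` is increasing for the lexicographic order on paths**: for all `n ≥ 1`,
if `p ≤ q` then `X_n(p) ≤ X_n(q)`. -/
theorem X_monotone (N : ℕ) (hN : 1 ≤ N) (Φ : Fin N → List Bool → ℝ)
    (hpos : ∀ (i : Fin N) (w : List Bool), 0 < Φ i w)
    (hharm : ∀ (i : Fin N) (w : List Bool), Φ i w = Φ i (w ++ [false]) + Φ i (w ++ [true]))
    (p q : Fin N × (ℕ → Bool)) (hpq : PathLt p q ∨ p = q) :
    ∀ m : ℕ, X Φ m p ≤ X Φ m q := by
  intro m
  rcases hpq with (h | ⟨h, n, hk, hs, ht⟩) | rfl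
  · exact Y_le_of_edgeLt Φ hpos m _ _ _ _ (Or.inl h)
  · by_cases hnm : n < m
    · exact Y_le_of_edgeLt Φ hpos m _ _ _ _ (Or.inr ⟨h, lex_ofFn _ _ n m hk hs ht hnm⟩)
    · unfold X
      have : (fun k : Fin m => p.2 k.val) = fun k : Fin m => q.2 k.val := by
        funext k
        exact hk _ (by omega)
      rw [h, this]
  · exact le_rfl
end
end

section
/- Let π : ℝ → AddCircle ∂Φ be the quotient map and let X̄_∞ ⊆ AddCircle ∂Φ be the closure of ⋃_{p irrational} π([X^L_∞(p), X^R_∞(p)]), the union over all irrational paths p of the images of the closed real intervals [X^L_∞(p), X^R_∞(p)]. Then the complement (AddCircle ∂Φ) \ X̄_∞ is the union, over all complementary regions e, of the sets J_e, where J_e := π( (X^L_∞(∂^L e), X^R_∞(∂^R e)) ) for every edge-labelled region and every root region between i and i+1 with i + 1 ≤ N − 1, and J_e := π( (X^L_∞(∂^L e), X^R_∞(∂^R e) + ∂Φ) ) for the root region between N−1 and 0; moreover the sets J_e are pairwise disjoint. -/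
noncomputable section
open Filter Topology Classical

/-- The constant Boolean sequence `c^∞`. -/
def constSeq (c : Bool) : ℕ → Bool := fun _ => c

/-- The Boolean sequence `w ++ [b] ++ c^∞`. -/
def extendSeq (w : List Bool) (b c : Bool) : ℕ → Bool := fun n =>
  if h : n < w.length then w.get ⟨n, h⟩ else if n = w.length then b else c

/-- A path is rational iff its Boolean sequence is eventually constant. -/
def RationalPath {N : ℕ} (p : Fin N × (ℕ → Bool)) : Prop :=
  ∃ (c : Bool) (m : ℕ), ∀ n ≥ m, p.2 n = c

/-- `X_∞(p) = lim_n X_n(p)` (the limit exists for every path). -/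
def Xinf {N : ℕ} (Φ : Fin N → List Bool → ℝ) (p : Fin N × (ℕ → Bool)) : ℝ :=
  limUnder atTop (fun m => X Φ m p)

/-- `X^L_∞(p) = sup {X_∞(q) : q < p}`. -/
def XL {N : ℕ} (Φ : Fin N → List Bool → ℝ) (p : Fin N × (ℕ → Bool)) : ℝ :=
  sSup (Xinf Φ '' {q | PathLt q p})

/-- `X^R_∞(p) = inf {X_∞(q) : q > p}`. -/
def XR {N : ℕ} (Φ : Fin N → List Bool → ℝ) (p : Fin N × (ℕ → Bool)) : ℝ :=
  sInf (Xinf Φ '' {q | PathLt p q})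

/-- The cyclically next initial-edge index. -/
def nextIdx {N : ℕ} (hN : 1 ≤ N) (i : Fin N) : Fin N :=
  ⟨((i : ℕ) + 1) % N, Nat.mod_lt _ hN⟩

/-- The closed set `X̄_∞ ⊆ ℝ/∂Φℤ`: the closure of the union, over the irrational
paths `p`, of the images of the closed intervals `[X^L_∞(p), X^R_∞(p)]`. -/
def XbarInf {N : ℕ} (Φ : Fin N → List Bool → ℝ) :
    Set (AddCircle (∑ i : Fin N, Φ i [])) :=
  closure (⋃ p ∈ {p : Fin N × (ℕ → Bool) | ¬ RationalPath p},
    (fun x : ℝ => (x : AddCircle (∑ i : Fin N, Φ i []))) '' Set.Icc (XL Φ p) (XR Φ p))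

/-- The open interval `J_e ⊆ ℝ/∂Φℤ` of a complementary region: for an edge-labelled
region `(i, w)` it is the image of `(X^L_∞(∂^L(i,w)), X^R_∞(∂^R(i,w)))`; for a root
region between `i` and `i+1` with `i + 1 ≤ N − 1` it is the image of
`(X^L_∞((i, true^∞)), X^R_∞((i+1, false^∞)))`; and for the root region between `N−1`
and `0` it is the image of `(X^L_∞((N−1, true^∞)), X^R_∞((0, false^∞)) + ∂Φ)`. -/
def regionInterval {N : ℕ} (hN : 1 ≤ N) (Φ : Fin N → List Bool → ℝ) :
    (Fin N × List Bool) ⊕ Fin N → Set (AddCircle (∑ i : Fin N, Φ i []))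
  | Sum.inl e =>
      (fun x : ℝ => (x : AddCircle (∑ i : Fin N, Φ i []))) ''
        Set.Ioo (XL Φ (e.1, extendSeq e.2 false true)) (XR Φ (e.1, extendSeq e.2 true false))
  | Sum.inr i =>
      if (i : ℕ) + 1 < N then
        (fun x : ℝ => (x : AddCircle (∑ i : Fin N, Φ i []))) ''
          Set.Ioo (XL Φ (i, constSeq true)) (XR Φ (nextIdx hN i, constSeq false))
      else
        (fun x : ℝ => (x : AddCircle (∑ i : Fin N, Φ i []))) ''
          Set.Ioo (XL Φ (i, constSeq true))
            (XR Φ (nextIdx hN i, constSeq false) + ∑ i : Fin N, Φ i [])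

/-! ### Helpers -/

lemma lexAppend (c b : Bool) : ∀ (u w : List Bool), u.length = w.length →
    (List.Lex (· < ·) (u ++ [c]) (w ++ [b]) ↔
      List.Lex (· < ·) u w ∨ (u = w ∧ c = false ∧ b = true))
  | [], [], _ => by
      cases c <;> cases b <;> simp [List.lex_cons_iff, List.cons_lex_cons_iff]
  | [], _ :: _, h => by simp at h
  | _ :: _, [], h => by simp at h
  | x :: u, y :: w, h => by
      have ih := lexAppend c b u w (by simpa using h)
      simp only [List.cons_append, List.cons_lex_cons_iff, ih, List.cons.injEq]
      tauto

/-- Prefix of length `m`. -/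
def pre (s : ℕ → Bool) (m : ℕ) : List Bool := List.ofFn (fun k : Fin m => s k.val)

lemma pre_succ (s : ℕ → Bool) (m : ℕ) : pre s (m+1) = pre s m ++ [s m] := by
  unfold pre
  rw [List.ofFn_succ_last]
  simp

lemma pre_congr {s t : ℕ → Bool} {m : ℕ} (h : ∀ k < m, s k = t k) : pre s m = pre t m := by
  unfold pre
  congr 1
  funext k
  exact h k k.2

/-- Sum of the first `k` root weights. -/
def FF {N : ℕ} (Φ : Fin N → List Bool → ℝ) (k : ℕ) : ℝ :=
  ∑ j : Fin N, if j.val < k then Φ j [] else 0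

/-- Left endpoint of the interval of the `m`-th edge. -/
def lo {N : ℕ} (Φ : Fin N → List Bool → ℝ) (p : Fin N × (ℕ → Bool)) (m : ℕ) : ℝ :=
  FF Φ p.1 + ∑ k ∈ Finset.range m, if p.2 k = true then Φ p.1 (pre p.2 k ++ [false]) else 0

/-- Right endpoint of the interval of the `m`-th edge. -/
def hi {N : ℕ} (Φ : Fin N → List Bool → ℝ) (p : Fin N × (ℕ → Bool)) (m : ℕ) : ℝ :=
  lo Φ p m + Φ p.1 (pre p.2 m)

lemma FF_succ {N : ℕ} (Φ : Fin N → List Bool → ℝ) (i : Fin N) :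
    FF Φ (i.val + 1) = FF Φ i + Φ i [] := by
  have : Φ i [] = ∑ j : Fin N, if j = i then Φ j [] else 0 := by simp
  rw [this, FF, FF, ← Finset.sum_add_distrib]
  refine Finset.sum_congr rfl fun j _ => ?_
  by_cases h : j = i
  · subst h; simp
  · have h' : j.val ≠ i.val := fun h2 => h (Fin.ext h2)
    by_cases h3 : j.val < i.val
    · simp [h, h3, Nat.lt_succ_of_lt h3]
    · have : ¬ j.val < i.val + 1 := by omega
      simp [h, h3, this]

lemma FF_zero {N : ℕ} (Φ : Fin N → List Bool → ℝ) : FF Φ 0 = 0 := by simp [FF]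

lemma FF_top {N : ℕ} (Φ : Fin N → List Bool → ℝ) : FF Φ N = ∑ i, Φ i [] := by simp [FF]

lemma FF_mono {N : ℕ} {Φ : Fin N → List Bool → ℝ} (hpos : ∀ i w, 0 < Φ i w) {a b : ℕ}
    (h : a ≤ b) : FF Φ a ≤ FF Φ b := by
  refine Finset.sum_le_sum fun j _ => ?_
  have := (hpos j []).le
  split_ifs
  · exact le_rfl
  · omega
  · exact this
  · exact le_rfl

section tree
variable {N : ℕ} {Φ : Fin N → List Bool → ℝ}

lemma lo_succ (p : Fin N × (ℕ → Bool)) (m : ℕ) :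
    lo Φ p (m+1) = lo Φ p m + if p.2 m = true then Φ p.1 (pre p.2 m ++ [false]) else 0 := by
  simp [lo, Finset.sum_range_succ, add_assoc]

lemma hi_succ (hharm : ∀ i w, Φ i w = Φ i (w ++ [false]) + Φ i (w ++ [true]))
    (p : Fin N × (ℕ → Bool)) (m : ℕ) :
    hi Φ p (m+1) = hi Φ p m - if p.2 m = true then 0 else Φ p.1 (pre p.2 m ++ [true]) := by
  have := hharm p.1 (pre p.2 m)
  unfold hi
  rw [lo_succ, pre_succ]
  cases h : p.2 m <;> simp <;> linarith

lemma lo_congr {i : Fin N} {s t : ℕ → Bool} {m : ℕ} (h : ∀ k < m, s k = t k) :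
    lo Φ (i, s) m = lo Φ (i, t) m := by
  unfold lo
  congr 1
  refine Finset.sum_congr rfl fun k hk => ?_
  have hk := Finset.mem_range.1 hk
  simp only
  rw [h k hk, pre_congr (fun j hj => h j (hj.trans hk))]

lemma hi_congr {i : Fin N} {s t : ℕ → Bool} {m : ℕ} (h : ∀ k < m, s k = t k) :
    hi Φ (i, s) m = hi Φ (i, t) m := by
  unfold hi
  rw [lo_congr h]
  simp only
  rw [pre_congr h]

lemma lo_mono (hpos : ∀ i w, 0 < Φ i w) (p : Fin N × (ℕ → Bool)) : Monotone (lo Φ p) := by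
  refine monotone_nat_of_le_succ fun m => ?_
  rw [lo_succ]
  have := (hpos p.1 (pre p.2 m ++ [false])).le
  split_ifs <;> linarith

lemma hi_anti (hpos : ∀ i w, 0 < Φ i w)
    (hharm : ∀ i w, Φ i w = Φ i (w ++ [false]) + Φ i (w ++ [true]))
    (p : Fin N × (ℕ → Bool)) : Antitone (hi Φ p) := by
  refine antitone_nat_of_succ_le fun m => ?_
  rw [hi_succ hharm]
  have := (hpos p.1 (pre p.2 m ++ [true])).le
  split_ifs <;> linarith

lemma lo_le_hi (hpos : ∀ i w, 0 < Φ i w)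
    (hharm : ∀ i w, Φ i w = Φ i (w ++ [false]) + Φ i (w ++ [true]))
    (p : Fin N × (ℕ → Bool)) (m n : ℕ) : lo Φ p m ≤ hi Φ p n := by
  have h1 := lo_mono hpos p (le_max_left m n)
  have h2 := hi_anti hpos hharm p (le_max_right m n)
  have h3 : lo Φ p (max m n) ≤ hi Φ p (max m n) := by
    have := (hpos p.1 (pre p.2 (max m n))).le
    unfold hi; linarith
  linarith

/-- Limit of left endpoints. -/
def AA (Φ : Fin N → List Bool → ℝ) (p : Fin N × (ℕ → Bool)) : ℝ := ⨆ m, lo Φ p m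
/-- Limit of right endpoints. -/
def BB (Φ : Fin N → List Bool → ℝ) (p : Fin N × (ℕ → Bool)) : ℝ := ⨅ m, hi Φ p m

lemma lo_bdd (hpos : ∀ i w, 0 < Φ i w)
    (hharm : ∀ i w, Φ i w = Φ i (w ++ [false]) + Φ i (w ++ [true]))
    (p : Fin N × (ℕ → Bool)) : BddAbove (Set.range (lo Φ p)) := by
  refine ⟨hi Φ p 0, ?_⟩
  rintro _ ⟨m, rfl⟩
  exact lo_le_hi hpos hharm p m 0

lemma hi_bdd (hpos : ∀ i w, 0 < Φ i w)
    (hharm : ∀ i w, Φ i w = Φ i (w ++ [false]) + Φ i (w ++ [true]))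
    (p : Fin N × (ℕ → Bool)) : BddBelow (Set.range (hi Φ p)) := by
  refine ⟨lo Φ p 0, ?_⟩
  rintro _ ⟨m, rfl⟩
  exact lo_le_hi hpos hharm p 0 m

lemma lo_le_AA (hpos : ∀ i w, 0 < Φ i w)
    (hharm : ∀ i w, Φ i w = Φ i (w ++ [false]) + Φ i (w ++ [true]))
    (p : Fin N × (ℕ → Bool)) (m : ℕ) : lo Φ p m ≤ AA Φ p :=
  le_ciSup (lo_bdd hpos hharm p) m

lemma BB_le_hi (hpos : ∀ i w, 0 < Φ i w)
    (hharm : ∀ i w, Φ i w = Φ i (w ++ [false]) + Φ i (w ++ [true]))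
    (p : Fin N × (ℕ → Bool)) (m : ℕ) : BB Φ p ≤ hi Φ p m :=
  ciInf_le (hi_bdd hpos hharm p) m

lemma AA_le_BB (hpos : ∀ i w, 0 < Φ i w)
    (hharm : ∀ i w, Φ i w = Φ i (w ++ [false]) + Φ i (w ++ [true]))
    (p : Fin N × (ℕ → Bool)) : AA Φ p ≤ BB Φ p :=
  ciSup_le fun m => le_ciInf fun n => lo_le_hi hpos hharm p m n

lemma AA_nonneg (hpos : ∀ i w, 0 < Φ i w)
    (hharm : ∀ i w, Φ i w = Φ i (w ++ [false]) + Φ i (w ++ [true]))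
    (p : Fin N × (ℕ → Bool)) : 0 ≤ AA Φ p := by
  refine le_trans ?_ (lo_le_AA hpos hharm p 0)
  have := FF_mono hpos (Nat.zero_le p.1.val)
  rw [FF_zero] at this
  simpa [lo] using this

lemma hi_zero (p : Fin N × (ℕ → Bool)) : hi Φ p 0 = FF Φ (p.1.val + 1) := by
  rw [FF_succ]; simp [hi, lo, pre]

lemma lo_zero (p : Fin N × (ℕ → Bool)) : lo Φ p 0 = FF Φ p.1.val := by
  simp [lo]

lemma BB_le (hpos : ∀ i w, 0 < Φ i w)
    (hharm : ∀ i w, Φ i w = Φ i (w ++ [false]) + Φ i (w ++ [true]))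
    (p : Fin N × (ℕ → Bool)) : BB Φ p ≤ ∑ i, Φ i [] := by
  refine le_trans (BB_le_hi hpos hharm p 0) ?_
  rw [hi_zero, ← FF_top]
  exact FF_mono hpos p.1.2

lemma sum_step (hharm : ∀ i w, Φ i w = Φ i (w ++ [false]) + Φ i (w ++ [true]))
    (p : Fin N × (ℕ → Bool)) (m : ℕ) :
    (∑ x : Fin N × (Fin (m+1) → Bool),
      if EdgeLt (x.1, List.ofFn x.2) (p.1, pre p.2 (m+1)) then Φ x.1 (List.ofFn x.2) else 0) =
    (∑ x : Fin N × (Fin m → Bool),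
      if EdgeLt (x.1, List.ofFn x.2) (p.1, pre p.2 m) then Φ x.1 (List.ofFn x.2) else 0) +
      if p.2 m = true then Φ p.1 (pre p.2 m ++ [false]) else 0 := by
  have e : (if p.2 m = true then Φ p.1 (pre p.2 m ++ [false]) else 0) =
      ∑ x : Fin N × (Fin m → Bool), if x = (p.1, fun k : Fin m => p.2 k.val) then
        (if p.2 m = true then Φ p.1 (pre p.2 m ++ [false]) else 0) else 0 := by
    simp
  rw [e, ← Finset.sum_add_distrib, Fintype.sum_prod_type, Fintype.sum_prod_type]
  refine Finset.sum_congr rfl fun j _ => ?_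
  rw [← (Fin.snocEquiv (fun _ : Fin (m+1) => Bool)).sum_comp, Fintype.sum_prod_type_right]
  refine Finset.sum_congr rfl fun u _ => ?_
  have hof : ∀ c : Bool, List.ofFn ((Fin.snocEquiv (fun _ : Fin (m+1) => Bool)) (c, u)) =
      List.ofFn u ++ [c] := by
    intro c
    rw [List.ofFn_succ_last]
    simp [Fin.snocEquiv]
  have hiff : ((j, u) = (p.1, fun k : Fin m => p.2 k.val)) ↔
      (j = p.1 ∧ List.ofFn u = pre p.2 m) := by
    rw [Prod.mk.injEq, pre, List.ofFn_inj]
  have hE : ∀ c : Bool, EdgeLt (j, List.ofFn u ++ [c]) (p.1, pre p.2 (m+1)) ↔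
      EdgeLt (j, List.ofFn u) (p.1, pre p.2 m) ∨
        ((j = p.1 ∧ List.ofFn u = pre p.2 m) ∧ c = false ∧ p.2 m = true) := by
    intro c
    unfold EdgeLt
    rw [pre_succ]
    simp only
    rw [lexAppend _ _ _ _ (by simp [pre])]
    tauto
  have hnot : (j = p.1 ∧ List.ofFn u = pre p.2 m) →
      ¬ EdgeLt (j, List.ofFn u) (p.1, pre p.2 m) := by
    rintro ⟨h1, h2⟩ h
    rw [h1, h2] at h
    rcases h with h | ⟨_, h⟩
    · exact lt_irrefl _ h
    · exact (irrefl_of (List.Lex (· < ·)) _) h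
  rw [Fintype.sum_bool]
  simp only [hof, hE, hiff]
  by_cases h : j = p.1 ∧ List.ofFn u = pre p.2 m
  · have h3 := hnot h
    obtain ⟨rfl, h2⟩ := h
    rw [h2] at h3 ⊢
    simp [h3]
  · have h3 := hharm j (List.ofFn u)
    simp only [h, false_and, or_false, if_false, add_zero]
    split_ifs
    · rw [h3, add_comm]
    · simp

lemma X_eq (hharm : ∀ i w, Φ i w = Φ i (w ++ [false]) + Φ i (w ++ [true]))
    (p : Fin N × (ℕ → Bool)) (m : ℕ) : X Φ m p = (lo Φ p m + hi Φ p m) / 2 := by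
  have key : (∑ x : Fin N × (Fin m → Bool),
      if EdgeLt (x.1, List.ofFn x.2) (p.1, pre p.2 m) then Φ x.1 (List.ofFn x.2) else 0)
      = lo Φ p m := by
    induction m with
    | zero =>
      rw [lo_zero, FF, Fintype.sum_prod_type]
      simp [EdgeLt, pre]
    | succ m ih => rw [sum_step hharm, ih, lo_succ]
  unfold X Y hi
  unfold pre at *
  rw [key]
  ring

lemma Xinf_eq (hpos : ∀ i w, 0 < Φ i w)
    (hharm : ∀ i w, Φ i w = Φ i (w ++ [false]) + Φ i (w ++ [true]))
    (p : Fin N × (ℕ → Bool)) : Xinf Φ p = (AA Φ p + BB Φ p) / 2 := by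
  refine Tendsto.limUnder_eq ?_
  simp only [X_eq hharm]
  exact ((tendsto_atTop_ciSup (lo_mono hpos p) (lo_bdd hpos hharm p)).add
    (tendsto_atTop_ciInf (hi_anti hpos hharm p) (hi_bdd hpos hharm p))).div_const 2

lemma split_eq (hharm : ∀ i w, Φ i w = Φ i (w ++ [false]) + Φ i (w ++ [true]))
    {i : Fin N} {s t : ℕ → Bool} {n : ℕ}
    (h : ∀ k < n, s k = t k) (hs : s n = false) (ht : t n = true) :
    hi Φ (i, s) (n+1) = lo Φ (i, t) (n+1) := by
  rw [hi, lo_succ, lo_succ, lo_congr h, pre_succ]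
  simp [hs, ht, pre_congr h]

lemma BB_le_AA (hpos : ∀ i w, 0 < Φ i w)
    (hharm : ∀ i w, Φ i w = Φ i (w ++ [false]) + Φ i (w ++ [true]))
    {p q : Fin N × (ℕ → Bool)} (h : PathLt p q) : BB Φ p ≤ AA Φ q := by
  obtain ⟨i, s⟩ := p
  obtain ⟨j, t⟩ := q
  rcases h with h | ⟨h, n, h1, h2, h3⟩
  · refine (BB_le_hi hpos hharm _ 0).trans (le_trans ?_ (lo_le_AA hpos hharm _ 0))
    rw [hi_zero, lo_zero]
    exact FF_mono hpos h
  · simp only at h h1 h2 h3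
    subst h
    refine (BB_le_hi hpos hharm _ (n+1)).trans (le_trans ?_ (lo_le_AA hpos hharm _ (n+1)))
    exact (split_eq hharm h1 h2 h3).le

lemma BB_evTrue (hpos : ∀ i w, 0 < Φ i w)
    (hharm : ∀ i w, Φ i w = Φ i (w ++ [false]) + Φ i (w ++ [true]))
    (p : Fin N × (ℕ → Bool)) (n : ℕ) (h : ∀ k ≥ n, p.2 k = true) : BB Φ p = hi Φ p n := by
  refine le_antisymm (BB_le_hi hpos hharm _ _) (le_ciInf fun m => ?_)
  have : ∀ d, hi Φ p (n + d) = hi Φ p n := by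
    intro d
    induction d with
    | zero => rfl
    | succ d ih => rw [← add_assoc, hi_succ hharm, ih, h _ (by omega)]; simp
  rcases le_total m n with hmn | hmn
  · exact hi_anti hpos hharm p hmn
  · obtain ⟨d, rfl⟩ := Nat.exists_eq_add_of_le hmn
    exact (this d).ge

lemma AA_evFalse (hpos : ∀ i w, 0 < Φ i w)
    (hharm : ∀ i w, Φ i w = Φ i (w ++ [false]) + Φ i (w ++ [true]))
    (p : Fin N × (ℕ → Bool)) (n : ℕ) (h : ∀ k ≥ n, p.2 k = false) : AA Φ p = lo Φ p n := by
  refine le_antisymm (ciSup_le fun m => ?_) (lo_le_AA hpos hharm _ _)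
  have : ∀ d, lo Φ p (n + d) = lo Φ p n := by
    intro d
    induction d with
    | zero => rfl
    | succ d ih => rw [← add_assoc, lo_succ, ih, h _ (by omega)]; simp
  rcases le_total m n with hmn | hmn
  · exact lo_mono hpos p hmn
  · obtain ⟨d, rfl⟩ := Nat.exists_eq_add_of_le hmn
    exact (this d).le

/-- Divert `s` at `n`, then alternate. -/
def divert (s : ℕ → Bool) (n : ℕ) : ℕ → Bool := fun k =>
  if k < n then s k else if k = n then !(s n) else decide (k % 2 = 0)

lemma divert_irr (i : Fin N) (s : ℕ → Bool) (n : ℕ) : ¬ RationalPath (i, divert s n) := by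
  rintro ⟨c, m, h⟩
  have h1 := h (2 * (m + n + 1)) (by omega)
  have h2 := h (2 * (m + n + 1) + 1) (by omega)
  rw [← h2] at h1
  have a1 : ¬ (2 * (m + n + 1) < n) := by omega
  have a2 : ¬ (2 * (m + n + 1) = n) := by omega
  have a3 : ¬ (2 * (m + n + 1) + 1 < n) := by omega
  have a4 : ¬ (2 * (m + n + 1) + 1 = n) := by omega
  have a5 : (2 * (m + n + 1) + 1) % 2 = 1 := by omega
  simp [divert, a1, a2, a3, a4, a5] at h1

lemma divert_lt (s : ℕ → Bool) (n k : ℕ) (h : k < n) : divert s n k = s k := by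
  simp [divert, h]

lemma exists_left (hpos : ∀ i w, 0 < Φ i w)
    (hharm : ∀ i w, Φ i w = Φ i (w ++ [false]) + Φ i (w ++ [true]))
    (p : Fin N × (ℕ → Bool)) (h : ∀ m, ∃ n ≥ m, p.2 n = true) (m : ℕ) :
    ∃ q, ¬ RationalPath q ∧ PathLt q p ∧ lo Φ p m ≤ AA Φ q := by
  obtain ⟨n, hn, hp⟩ := h m
  refine ⟨(p.1, divert p.2 n), divert_irr _ _ _, Or.inr ⟨rfl, n, fun k hk => divert_lt _ _ _ hk,
    by simp [divert, hp], hp⟩, ?_⟩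
  refine (lo_mono hpos p hn).trans (le_trans ?_ (lo_le_AA hpos hharm _ n))
  exact (lo_congr (i := p.1) (fun k hk => (divert_lt p.2 n k hk).symm)).le

lemma exists_right (hpos : ∀ i w, 0 < Φ i w)
    (hharm : ∀ i w, Φ i w = Φ i (w ++ [false]) + Φ i (w ++ [true]))
    (p : Fin N × (ℕ → Bool)) (h : ∀ m, ∃ n ≥ m, p.2 n = false) (m : ℕ) :
    ∃ q, ¬ RationalPath q ∧ PathLt p q ∧ BB Φ q ≤ hi Φ p m := by
  obtain ⟨n, hn, hp⟩ := h m
  refine ⟨(p.1, divert p.2 n), divert_irr _ _ _, Or.inr ⟨rfl, n,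
    fun k hk => (divert_lt _ _ _ hk).symm, hp, by simp [divert, hp]⟩, ?_⟩
  refine (BB_le_hi hpos hharm _ n).trans (le_trans ?_ (hi_anti hpos hharm p hn))
  exact (hi_congr (i := p.1) (fun k hk => divert_lt p.2 n k hk)).le

lemma XL_eq (hpos : ∀ i w, 0 < Φ i w)
    (hharm : ∀ i w, Φ i w = Φ i (w ++ [false]) + Φ i (w ++ [true]))
    (p : Fin N × (ℕ → Bool)) (h : ∀ m, ∃ n ≥ m, p.2 n = true) : XL Φ p = AA Φ p := by
  refine IsLUB.csSup_eq ⟨?_, ?_⟩ ?_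
  · rintro _ ⟨q, hq, rfl⟩
    rw [Xinf_eq hpos hharm]
    have := AA_le_BB hpos hharm q
    have := BB_le_AA hpos hharm hq
    linarith
  · intro u hu
    refine ciSup_le fun m => ?_
    obtain ⟨q, -, hq, hle⟩ := exists_left hpos hharm p h m
    have := hu ⟨q, hq, rfl⟩
    rw [Xinf_eq hpos hharm] at this
    have := AA_le_BB hpos hharm q
    linarith
  · obtain ⟨q, -, hq, hle⟩ := exists_left hpos hharm p h 0
    exact ⟨_, q, hq, rfl⟩

lemma XR_eq (hpos : ∀ i w, 0 < Φ i w)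
    (hharm : ∀ i w, Φ i w = Φ i (w ++ [false]) + Φ i (w ++ [true]))
    (p : Fin N × (ℕ → Bool)) (h : ∀ m, ∃ n ≥ m, p.2 n = false) : XR Φ p = BB Φ p := by
  refine IsGLB.csInf_eq ⟨?_, ?_⟩ ?_
  · rintro _ ⟨q, hq, rfl⟩
    rw [Xinf_eq hpos hharm]
    have := AA_le_BB hpos hharm q
    have := BB_le_AA hpos hharm hq
    linarith
  · intro u hu
    refine le_ciInf fun m => ?_
    obtain ⟨q, -, hq, hle⟩ := exists_right hpos hharm p h m
    have := hu ⟨q, hq, rfl⟩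
    rw [Xinf_eq hpos hharm] at this
    have := AA_le_BB hpos hharm q
    linarith
  · obtain ⟨q, -, hq, hle⟩ := exists_right hpos hharm p h 0
    exact ⟨_, q, hq, rfl⟩

/-- Union of the real intervals of the irrational paths. -/
def UU (Φ : Fin N → List Bool → ℝ) : Set ℝ :=
  {x | ∃ p : Fin N × (ℕ → Bool), ¬ RationalPath p ∧ AA Φ p ≤ x ∧ x ≤ BB Φ p}

lemma AA_mem_closure (hpos : ∀ i w, 0 < Φ i w)
    (hharm : ∀ i w, Φ i w = Φ i (w ++ [false]) + Φ i (w ++ [true]))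
    (p : Fin N × (ℕ → Bool)) (h : ∀ m, ∃ n ≥ m, p.2 n = true) : AA Φ p ∈ closure (UU Φ) := by
  choose q hirr hlt hle using exists_left hpos hharm p h
  refine mem_closure_of_tendsto (f := fun m => AA Φ (q m)) (b := atTop) ?_
    (Eventually.of_forall fun m => ⟨q m, hirr m, le_rfl, AA_le_BB hpos hharm _⟩)
  exact tendsto_of_tendsto_of_tendsto_of_le_of_le
    (tendsto_atTop_ciSup (lo_mono hpos p) (lo_bdd hpos hharm p)) tendsto_const_nhds hle
    (fun m => (AA_le_BB hpos hharm _).trans (BB_le_AA hpos hharm (hlt m)))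

lemma BB_mem_closure (hpos : ∀ i w, 0 < Φ i w)
    (hharm : ∀ i w, Φ i w = Φ i (w ++ [false]) + Φ i (w ++ [true]))
    (p : Fin N × (ℕ → Bool)) (h : ∀ m, ∃ n ≥ m, p.2 n = false) : BB Φ p ∈ closure (UU Φ) := by
  choose q hirr hlt hle using exists_right hpos hharm p h
  refine mem_closure_of_tendsto (f := fun m => BB Φ (q m)) (b := atTop) ?_
    (Eventually.of_forall fun m => ⟨q m, hirr m, AA_le_BB hpos hharm _, le_rfl⟩)
  exact tendsto_of_tendsto_of_tendsto_of_le_of_le tendsto_const_nhds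
    (tendsto_atTop_ciInf (hi_anti hpos hharm p) (hi_bdd hpos hharm p))
    (fun m => (BB_le_AA hpos hharm (hlt m)).trans (AA_le_BB hpos hharm _)) hle

lemma irr_true {p : Fin N × (ℕ → Bool)} (h : ¬ RationalPath p) (m : ℕ) :
    ∃ n ≥ m, p.2 n = true := by
  by_contra hc
  push Not at hc
  exact h ⟨false, m, fun n hn => by simpa using hc n hn⟩

lemma irr_false {p : Fin N × (ℕ → Bool)} (h : ¬ RationalPath p) (m : ℕ) :
    ∃ n ≥ m, p.2 n = false := by
  by_contra hc
  push Not at hc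
  exact h ⟨true, m, fun n hn => by simpa using hc n hn⟩

lemma XbarInf_eq (hpos : ∀ i w, 0 < Φ i w)
    (hharm : ∀ i w, Φ i w = Φ i (w ++ [false]) + Φ i (w ++ [true])) :
    XbarInf Φ = closure ((fun x : ℝ => (x : AddCircle (∑ i : Fin N, Φ i []))) '' UU Φ) := by
  unfold XbarInf
  congr 1
  ext z
  simp only [Set.mem_iUnion, Set.mem_ofPred_eq, Set.mem_image, Set.mem_Icc, UU]
  constructor
  · rintro ⟨p, hp, x, ⟨h1, h2⟩, rfl⟩
    rw [XL_eq hpos hharm p (irr_true hp)] at h1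
    rw [XR_eq hpos hharm p (irr_false hp)] at h2
    exact ⟨x, ⟨p, hp, h1, h2⟩, rfl⟩
  · rintro ⟨x, ⟨p, hp, h1, h2⟩, rfl⟩
    refine ⟨p, hp, x, ⟨?_, ?_⟩, rfl⟩
    · rwa [XL_eq hpos hharm p (irr_true hp)]
    · rwa [XR_eq hpos hharm p (irr_false hp)]

lemma exists_step (F : ℕ → ℝ) (x : ℝ) : ∀ n, 1 ≤ n → F 0 ≤ x → x ≤ F n →
    ∃ i < n, F i ≤ x ∧ x ≤ F (i+1)
  | 0, h, _, _ => by omega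
  | n+1, _, h0, h1 => by
    by_cases hx : F n ≤ x
    · exact ⟨n, by omega, hx, h1⟩
    · rcases Nat.eq_zero_or_pos n with rfl | hn
      · exact absurd h0 hx
      · obtain ⟨i, hi, h⟩ := exists_step F x n hn h0 (not_le.1 hx).le
        exact ⟨i, by omega, h⟩

/-- Word and left endpoint followed by the point `x`. -/
def st (Φ : Fin N → List Bool → ℝ) (i : Fin N) (x : ℝ) : ℕ → List Bool × ℝ
  | 0 => ([], FF Φ i)
  | n+1 =>
    if (st Φ i x n).2 + Φ i ((st Φ i x n).1 ++ [false]) ≤ x then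
      ((st Φ i x n).1 ++ [true], (st Φ i x n).2 + Φ i ((st Φ i x n).1 ++ [false]))
    else ((st Φ i x n).1 ++ [false], (st Φ i x n).2)

lemma exists_path (hN : 1 ≤ N) 
    (hharm : ∀ i w, Φ i w = Φ i (w ++ [false]) + Φ i (w ++ [true]))
    (x : ℝ) (h0 : 0 ≤ x) (h1 : x ≤ ∑ i, Φ i []) : ∃ p, AA Φ p ≤ x ∧ x ≤ BB Φ p := by
  obtain ⟨i, hiN, ha, hb⟩ := exists_step (FF Φ) x N hN (by rwa [FF_zero]) (by rwa [FF_top])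
  obtain ⟨i, rfl⟩ : ∃ j : Fin N, j.val = i := ⟨⟨i, hiN⟩, rfl⟩
  let s : ℕ → Bool := fun n =>
    decide ((st Φ i x n).2 + Φ i ((st Φ i x n).1 ++ [false]) ≤ x)
  have key : ∀ n, (st Φ i x n).1 = pre s n ∧ (st Φ i x n).2 = lo Φ (i, s) n ∧
      lo Φ (i, s) n ≤ x ∧ x ≤ hi Φ (i, s) n := by
    intro n
    induction n with
    | zero => exact ⟨by simp [st, pre], by simp [st, lo], by rwa [lo_zero], by rwa [hi_zero]⟩
    | succ n ih =>
      obtain ⟨i1, i2, i3, i4⟩ := ih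
      have hs : s n = decide (lo Φ (i, s) n + Φ i (pre s n ++ [false]) ≤ x) := by
        rw [← i1, ← i2]
      have hh := hharm i (pre s n)
      have hi' : hi Φ (i, s) n = lo Φ (i, s) n + Φ i (pre s n) := rfl
      rw [hi_succ hharm, lo_succ, pre_succ, st, i1, i2]
      simp only
      by_cases hc : lo Φ (i, s) n + Φ i (pre s n ++ [false]) ≤ x
      · have hs' : s n = true := by rw [hs]; simpa using hc
        simp only [hc, hs']
        simp
        exact ⟨hc, i4⟩
      · have hs' : s n = false := by rw [hs]; simpa using hc
        simp only [hc, hs']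
        simp
        exact ⟨i3, by linarith⟩
  exact ⟨(i, s), ciSup_le fun m => (key m).2.2.1, le_ciInf fun m => (key m).2.2.2⟩

lemma trichotomy (p q : Fin N × (ℕ → Bool)) : p = q ∨ PathLt p q ∨ PathLt q p := by
  obtain ⟨i, s⟩ := p
  obtain ⟨j, t⟩ := q
  rcases lt_trichotomy i j with h | h | h
  · exact Or.inr (Or.inl (Or.inl h))
  · subst h
    by_cases hst : s = t
    · exact Or.inl (by rw [hst])
    · have hex : ∃ n, s n ≠ t n := by
        by_contra hc
        push Not at hc
        exact hst (funext hc)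
      have h1 := Nat.find_spec hex
      have h2 : ∀ k < Nat.find hex, s k = t k := fun k hk => by
        have := Nat.find_min hex hk
        simpa using this
      right
      cases hs : s (Nat.find hex) with
      | false =>
        left; right
        refine ⟨rfl, _, h2, hs, ?_⟩
        rw [hs] at h1
        cases ht : t (Nat.find hex) <;> simp_all
      | true =>
        right; right
        refine ⟨rfl, _, fun k hk => (h2 k hk).symm, ?_, hs⟩
        rw [hs] at h1
        cases ht : t (Nat.find hex) <;> simp_all
  · exact Or.inr (Or.inr (Or.inl h))

/-- Left boundary path. -/
def regL : (Fin N × List Bool) ⊕ Fin N → Fin N × (ℕ → Bool)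
  | Sum.inl e => (e.1, extendSeq e.2 false true)
  | Sum.inr i => (i, constSeq true)

/-- Right boundary path. -/
def regR (hN : 1 ≤ N) : (Fin N × List Bool) ⊕ Fin N → Fin N × (ℕ → Bool)
  | Sum.inl e => (e.1, extendSeq e.2 true false)
  | Sum.inr i => (nextIdx hN i, constSeq false)

/-- Shift of the region. -/
def regD (Φ : Fin N → List Bool → ℝ) : (Fin N × List Bool) ⊕ Fin N → ℝ
  | Sum.inl _ => 0
  | Sum.inr i => if (i : ℕ) + 1 < N then 0 else ∑ i, Φ i []

lemma ext_lt (w : List Bool) (b c : Bool) (k : ℕ) (h : k < w.length) :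
    extendSeq w b c k = w[k] := by simp [extendSeq, h]

lemma ext_eq (w : List Bool) (b c : Bool) : extendSeq w b c w.length = b := by
  simp [extendSeq]

lemma ext_gt (w : List Bool) (b c : Bool) (k : ℕ) (h : w.length < k) :
    extendSeq w b c k = c := by
  have h1 : ¬ k < w.length := by omega
  have h2 : ¬ k = w.length := by omega
  simp [extendSeq, h1, h2]

lemma regL_ev (r : (Fin N × List Bool) ⊕ Fin N) : ∃ m, ∀ n ≥ m, (regL r).2 n = true := by
  rcases r with e | i
  · exact ⟨e.2.length + 1, fun n hn => ext_gt _ _ _ _ hn⟩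
  · exact ⟨0, fun n _ => rfl⟩

lemma regR_ev (hN : 1 ≤ N) (r : (Fin N × List Bool) ⊕ Fin N) :
    ∃ m, ∀ n ≥ m, (regR hN r).2 n = false := by
  rcases r with e | i
  · exact ⟨e.2.length + 1, fun n hn => ext_gt _ _ _ _ hn⟩
  · exact ⟨0, fun n _ => rfl⟩

lemma regL_frq (r : (Fin N × List Bool) ⊕ Fin N) (m : ℕ) : ∃ n ≥ m, (regL r).2 n = true := by
  obtain ⟨k, hk⟩ := regL_ev r
  exact ⟨max m k, le_max_left _ _, hk _ (le_max_right _ _)⟩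

lemma regR_frq (hN : 1 ≤ N) (r : (Fin N × List Bool) ⊕ Fin N) (m : ℕ) :
    ∃ n ≥ m, (regR hN r).2 n = false := by
  obtain ⟨k, hk⟩ := regR_ev hN r
  exact ⟨max m k, le_max_left _ _, hk _ (le_max_right _ _)⟩

lemma regL_ne_regR (hN : 1 ≤ N) (r r' : (Fin N × List Bool) ⊕ Fin N) :
    regL r ≠ regR hN r' := by
  intro h
  obtain ⟨k, hk⟩ := regL_ev r
  obtain ⟨n, hn, h2⟩ := regR_frq hN r' k
  have := hk n hn
  rw [h, h2] at this
  simp at this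

lemma regionInterval_eq (hN : 1 ≤ N) (hpos : ∀ i w, 0 < Φ i w)
    (hharm : ∀ i w, Φ i w = Φ i (w ++ [false]) + Φ i (w ++ [true]))
    (r : (Fin N × List Bool) ⊕ Fin N) :
    regionInterval hN Φ r = (fun x : ℝ => (x : AddCircle (∑ i : Fin N, Φ i []))) ''
      Set.Ioo (AA Φ (regL r)) (BB Φ (regR hN r) + regD Φ r) := by
  rw [← XL_eq hpos hharm _ (regL_frq r), ← XR_eq hpos hharm _ (regR_frq hN r)]
  rcases r with e | i
  · simp [regionInterval, regL, regR, regD]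
  · by_cases h : (i : ℕ) + 1 < N <;> simp [regionInterval, regL, regR, regD, h]

lemma const_true_max (i : Fin N) (s : ℕ → Bool) :
    (i, s) = (i, constSeq true) ∨ PathLt (i, s) (i, constSeq true) := by
  rcases trichotomy (i, s) (i, constSeq true) with h | h | h
  · exact Or.inl h
  · exact Or.inr h
  · rcases h with h | ⟨_, n, _, h2, _⟩
    · exact absurd h (lt_irrefl _)
    · simp [constSeq] at h2

lemma const_false_min (i : Fin N) (s : ℕ → Bool) :
    (i, s) = (i, constSeq false) ∨ PathLt (i, constSeq false) (i, s) := by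
  rcases trichotomy (i, s) (i, constSeq false) with h | h | h
  · exact Or.inl h
  · rcases h with h | ⟨_, n, _, _, h2⟩
    · exact absurd h (lt_irrefl _)
    · simp [constSeq] at h2
  · exact Or.inr h

lemma nextIdx_lt (hN : 1 ≤ N) (i : Fin N) (h : (i : ℕ) + 1 < N) :
    (nextIdx hN i).val = i.val + 1 := Nat.mod_eq_of_lt h

lemma nextIdx_last (hN : 1 ≤ N) (i : Fin N) (h : ¬ (i : ℕ) + 1 < N) :
    (nextIdx hN i).val = 0 := by
  have : (i : ℕ) + 1 = N := by omega
  simp [nextIdx, this]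

lemma reg_order (hN : 1 ≤ N) (r : (Fin N × List Bool) ⊕ Fin N) :
    (regD Φ r = 0 ∧ ∀ p, (p = regL r ∨ PathLt p (regL r)) ∨
      (p = regR hN r ∨ PathLt (regR hN r) p)) ∨
    ((regD Φ r = ∑ i, Φ i []) ∧ ∀ p, (p = regL r ∨ PathLt p (regL r)) ∧
      (p = regR hN r ∨ PathLt (regR hN r) p)) := by
  rcases r with ⟨i, w⟩ | i
  · left
    refine ⟨rfl, fun p => ?_⟩
    rcases trichotomy p (regL (Sum.inl (i, w))) with h | h | h
    · exact Or.inl (Or.inl h)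
    · exact Or.inl (Or.inr h)
    rcases trichotomy p (regR hN (Sum.inl (i, w))) with h' | h' | h'
    · exact Or.inr (Or.inl h')
    swap
    · exact Or.inr (Or.inr h')
    exfalso
    obtain ⟨j, s⟩ := p
    rcases h with h | ⟨h, n, h1, h2, h3⟩
    · rcases h' with h' | ⟨h', _⟩
      · exact lt_asymm h h'
      · exact h.ne h'.symm
    · rcases h' with h' | ⟨h', m, g1, g2, g3⟩
      · exact h'.ne h.symm
      · simp only [regL, regR] at *
        have hn : n ≤ w.length := by
          by_contra hc
          rw [ext_gt _ _ _ _ (by omega)] at h2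
          simp at h2
        have hm : m ≤ w.length := by
          by_contra hc
          rw [ext_gt _ _ _ _ (by omega)] at g3
          simp at g3
        rcases hn.lt_or_eq with hn' | hn'
        · rcases lt_trichotomy n m with hnm | hnm | hnm
          · have := g1 n hnm
            rw [h3, ext_lt _ _ _ _ hn'] at this
            rw [ext_lt _ _ _ _ hn'] at h2
            rw [h2] at this
            simp at this
          · subst hnm
            rw [h3] at g2; simp at g2
          · have := h1 m hnm
            rw [g2, ext_lt _ _ _ _ (by omega)] at this
            rw [ext_lt _ _ _ _ (by omega)] at g3
            rw [g3] at this
            simp at this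
        · rcases hm.lt_or_eq with hm' | hm'
          · have := h1 m (by omega)
            rw [g2, ext_lt _ _ _ _ (by omega)] at this
            rw [ext_lt _ _ _ _ (by omega)] at g3
            rw [g3] at this
            simp at this
          · rw [← hm'.trans hn'.symm] at h3
            rw [h3] at g2; simp at g2
  · by_cases h : (i : ℕ) + 1 < N
    · left
      refine ⟨by simp [regD, h], ?_⟩
      rintro ⟨j, s⟩
      have hnx := nextIdx_lt hN i h
      rcases lt_trichotomy j i with hj | hj | hj
      · exact Or.inl (Or.inr (Or.inl hj))
      · subst hj
        exact Or.inl (const_true_max _ _)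
      · right
        rcases (show (nextIdx hN i) ≤ j by rw [Fin.le_def, hnx]; exact hj).eq_or_lt with h' | h'
        · subst h'
          exact const_false_min _ _
        · exact Or.inr (Or.inl h')
    · right
      refine ⟨by simp [regD, h], ?_⟩
      rintro ⟨j, s⟩
      have hnx := nextIdx_last hN i h
      constructor
      · rcases (show j ≤ i by rw [Fin.le_def]; omega).eq_or_lt with h' | h'
        · subst h'
          exact const_true_max _ _
        · exact Or.inr (Or.inl h')
      · rcases (show (nextIdx hN i) ≤ j by rw [Fin.le_def]; omega).eq_or_lt with h' | h'
        · subst h'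
          exact const_false_min _ _
        · exact Or.inr (Or.inl h')

lemma reg_glue (hN : 1 ≤ N) (hpos : ∀ i w, 0 < Φ i w)
    (hharm : ∀ i w, Φ i w = Φ i (w ++ [false]) + Φ i (w ++ [true]))
    (r : (Fin N × List Bool) ⊕ Fin N) :
    BB Φ (regL r) = AA Φ (regR hN r) + regD Φ r := by
  rcases r with ⟨i, w⟩ | i
  · simp only [regL, regR, regD, add_zero]
    rw [BB_evTrue hpos hharm _ (w.length + 1) (fun k hk => ext_gt _ _ _ _ hk),
      AA_evFalse hpos hharm _ (w.length + 1) (fun k hk => ext_gt _ _ _ _ hk)]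
    refine split_eq hharm (fun k hk => ?_) (ext_eq _ _ _) (ext_eq _ _ _)
    rw [ext_lt _ _ _ _ hk, ext_lt _ _ _ _ hk]
  · simp only [regL, regR, regD]
    rw [BB_evTrue hpos hharm _ 0 (fun k hk => rfl), AA_evFalse hpos hharm _ 0 (fun k hk => rfl),
      hi_zero, lo_zero]
    by_cases h : (i : ℕ) + 1 < N
    · simp [h, nextIdx_lt hN i h]
    · have h' : (i : ℕ) + 1 = N := by omega
      simp only [h, nextIdx_last hN i h, FF_zero]
      rw [h', FF_top]
      simp

lemma regL_inj : Function.Injective (regL (N := N)) := by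
  rintro (⟨i, w⟩ | i) (⟨j, v⟩ | j) h
  · simp only [regL, Prod.mk.injEq] at h
    obtain ⟨rfl, h⟩ := h
    have hlen : w.length = v.length := by
      rcases lt_trichotomy w.length v.length with hl | hl | hl
      · have := congrFun h v.length
        rw [ext_eq, ext_gt _ _ _ _ hl] at this
        simp at this
      · exact hl
      · have := congrFun h w.length
        rw [ext_eq, ext_gt _ _ _ _ hl] at this
        simp at this
    have : w = v := by
      refine List.ext_getElem hlen fun k h1 h2 => ?_
      rw [← ext_lt w false true k h1, ← ext_lt v false true k h2, h]
    rw [this]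
  · simp only [regL, Prod.mk.injEq] at h
    have := congrFun h.2 w.length
    rw [ext_eq] at this
    simp [constSeq] at this
  · simp only [regL, Prod.mk.injEq] at h
    have := congrFun h.2 v.length
    rw [ext_eq] at this
    simp [constSeq] at this
  · simp only [regL, Prod.mk.injEq] at h
    rw [h.1]

lemma ev_const (c : Bool) (s : ℕ → Bool) (m : ℕ) (h : ∀ n ≥ m, s n = c) :
    s = constSeq c ∨ ∃ w, s = extendSeq w (!c) c := by
  induction m with
  | zero => exact Or.inl (funext fun n => h n (Nat.zero_le _))
  | succ m ih =>
    by_cases hm : s m = c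
    · refine ih fun n hn => ?_
      rcases hn.lt_or_eq with h' | h'
      · exact h n h'
      · rw [← h']; exact hm
    · right
      refine ⟨pre s m, funext fun n => ?_⟩
      have hl : (pre s m).length = m := by simp [pre]
      rcases lt_trichotomy n m with h' | h' | h'
      · rw [ext_lt _ _ _ _ (by omega)]
        simp [pre]
      · subst h'
        have := ext_eq (pre s n) (!c) c
        rw [hl] at this
        rw [this]
        revert hm
        cases s n <;> cases c <;> simp
      · rw [ext_gt _ _ _ _ (by omega)]
        exact h n h'

lemma rat_cases (hN : 1 ≤ N) (p : Fin N × (ℕ → Bool)) (h : RationalPath p) :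
    ∃ r, p = regL r ∨ p = regR hN r := by
  obtain ⟨i, s⟩ := p
  obtain ⟨c, m, hm⟩ := h
  cases c with
  | true =>
    rcases ev_const true s m hm with h | ⟨w, h⟩
    · exact ⟨Sum.inr i, Or.inl (by rw [h]; rfl)⟩
    · exact ⟨Sum.inl (i, w), Or.inl (by rw [h]; rfl)⟩
  | false =>
    rcases ev_const false s m hm with h | ⟨w, h⟩
    · have : ∃ j, nextIdx hN j = i := by
        rcases Nat.eq_zero_or_pos i.val with h0 | h0
        · refine ⟨⟨N - 1, by omega⟩, Fin.ext ?_⟩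
          rw [nextIdx_last hN _ (by simp only; omega), h0]
        · refine ⟨⟨i.val - 1, by omega⟩, Fin.ext ?_⟩
          rw [nextIdx_lt hN _ (by simp only; omega)]
          simp only; omega
      obtain ⟨j, rfl⟩ := this
      exact ⟨Sum.inr j, Or.inr (by rw [h]; rfl)⟩
    · exact ⟨Sum.inl (i, w), Or.inr (by rw [h]; rfl)⟩

lemma coe_ne {T x y : ℝ} (h1 : x < y) (h2 : y < x + T) :
    (x : AddCircle T) ≠ (y : AddCircle T) := by
  haveI : Fact (0 < T) := ⟨by linarith⟩
  intro h
  rw [AddCircle.coe_eq_coe_iff_of_mem_Ico (a := x) ⟨le_rfl, by linarith⟩ ⟨h1.le, h2⟩] at h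
  exact h1.ne h

lemma PathLt_asymm {p q : Fin N × (ℕ → Bool)} (h : PathLt p q) (h' : PathLt q p) : False := by
  rcases h with h | ⟨h, n, h1, h2, h3⟩
  · rcases h' with h' | ⟨h', _⟩
    · exact lt_asymm h h'
    · exact h.ne h'.symm
  · rcases h' with h' | ⟨h', m, g1, g2, g3⟩
    · exact h'.ne h.symm
    · rcases lt_trichotomy n m with hnm | hnm | hnm
      · have := g1 n hnm
        rw [h2, h3] at this; simp at this
      · subst hnm
        rw [h2] at g3; simp at g3
      · have := h1 m hnm
        rw [g2, g3] at this; simp at this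

lemma coe_regD (r : (Fin N × List Bool) ⊕ Fin N) :
    ((regD Φ r : ℝ) : AddCircle (∑ i : Fin N, Φ i [])) = 0 := by
  rcases r with e | i
  · simp [regD]
  · by_cases h : (i : ℕ) + 1 < N
    · simp [regD, h]
    · simp only [regD, h, if_false]
      exact AddCircle.coe_period _

lemma disj_aux (hN : 1 ≤ N) (hpos : ∀ i w, 0 < Φ i w)
    (hharm : ∀ i w, Φ i w = Φ i (w ++ [false]) + Φ i (w ++ [true]))
    (r r' : (Fin N × List Bool) ⊕ Fin N) (h : PathLt (regL r) (regL r')) :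
    Disjoint (regionInterval hN Φ r) (regionInterval hN Φ r') := by
  rw [regionInterval_eq hN hpos hharm, regionInterval_eq hN hpos hharm, Set.disjoint_left]
  rintro _ ⟨x, ⟨hx1, hx2⟩, rfl⟩ ⟨y, ⟨hy1, hy2⟩, hxy⟩
  have hn : ¬ (regL r' = regL r ∨ PathLt (regL r') (regL r)) := by
    rintro (h' | h')
    · rw [h'] at h; exact PathLt_asymm h h
    · exact PathLt_asymm h h'
  rcases reg_order (Φ := Φ) hN r with ⟨hd, ho⟩ | ⟨hd, ho⟩
  swap
  · exact hn (ho (regL r')).1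
  have hR : PathLt (regR hN r) (regL r') := by
    rcases ho (regL r') with h' | h' | h'
    · exact absurd h' hn
    · exact absurd h' (regL_ne_regR _ _ _)
    · exact h'
  have h1 := BB_le_AA hpos hharm hR
  rw [hd] at hx2
  have h0 := AA_nonneg hpos hharm (regL r)
  refine coe_ne (T := ∑ i, Φ i []) (x := x) (y := y) (by linarith) ?_ hxy.symm
  rcases reg_order (Φ := Φ) hN r' with ⟨hd', ho'⟩ | ⟨hd', ho'⟩
  · have := BB_le hpos hharm (regR hN r')
    rw [hd'] at hy2
    linarith
  · have hR' : PathLt (regR hN r') (regL r) := by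
      rcases (ho' (regL r)).2 with h' | h'
      · exact absurd h' (regL_ne_regR _ _ _)
      · exact h'
    have := BB_le_AA hpos hharm hR'
    rw [hd'] at hy2
    linarith

lemma reg_sub (hN : 1 ≤ N) (hpos : ∀ i w, 0 < Φ i w)
    (hharm : ∀ i w, Φ i w = Φ i (w ++ [false]) + Φ i (w ++ [true]))
    (r : (Fin N × List Bool) ⊕ Fin N) :
    Disjoint (regionInterval hN Φ r) (XbarInf Φ) := by
  rw [regionInterval_eq hN hpos hharm, XbarInf_eq hpos hharm]
  refine Disjoint.closure_right ?_ ((QuotientAddGroup.isOpenMap_coe) _ isOpen_Ioo)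
  rw [Set.disjoint_left]
  rintro _ ⟨x, ⟨hx1, hx2⟩, rfl⟩ ⟨y, ⟨p, hp, hy1, hy2⟩, hxy⟩
  have hL : p ≠ regL r := by
    rintro rfl
    obtain ⟨m, hm⟩ := regL_ev r
    exact hp ⟨true, m, hm⟩
  have hR : p ≠ regR hN r := by
    rintro rfl
    obtain ⟨m, hm⟩ := regR_ev hN r
    exact hp ⟨false, m, hm⟩
  have a1 := AA_nonneg hpos hharm p
  have a2 := BB_le hpos hharm p
  have a3 := AA_nonneg hpos hharm (regL r)
  have a4 := BB_le hpos hharm (regR hN r)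
  rcases reg_order (Φ := Φ) hN r with ⟨hd, ho⟩ | ⟨hd, ho⟩
  · rw [hd] at hx2
    rcases ho p with (h | h) | (h | h)
    · exact hL h
    · have := BB_le_AA hpos hharm h
      exact coe_ne (T := ∑ i, Φ i []) (x := y) (y := x) (by linarith) (by linarith) hxy
    · exact hR h
    · have := BB_le_AA hpos hharm h
      exact coe_ne (T := ∑ i, Φ i []) (x := x) (y := y) (by linarith) (by linarith) hxy.symm
  · rw [hd] at hx2
    have h1 := BB_le_AA hpos hharm ((ho p).1.resolve_left hL)
    have h2 := BB_le_AA hpos hharm ((ho p).2.resolve_left hR)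
    exact coe_ne (T := ∑ i, Φ i []) (x := y) (y := x) (by linarith) (by linarith) hxy

lemma cover (hN : 1 ≤ N) (hpos : ∀ i w, 0 < Φ i w)
    (hharm : ∀ i w, Φ i w = Φ i (w ++ [false]) + Φ i (w ++ [true]))
    (z : AddCircle (∑ i : Fin N, Φ i [])) (hz : z ∉ XbarInf Φ) :
    ∃ r, z ∈ regionInterval hN Φ r := by
  have hT : 0 < ∑ i : Fin N, Φ i [] :=
    Finset.sum_pos (fun i _ => hpos i []) ⟨⟨0, hN⟩, Finset.mem_univ _⟩
  haveI : Fact (0 < ∑ i : Fin N, Φ i []) := ⟨hT⟩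
  obtain ⟨x, ⟨hx0, hx1⟩, rfl⟩ := AddCircle.eq_coe_Ico z
  rw [XbarInf_eq hpos hharm] at hz
  have hcl : ∀ y ∈ closure (UU Φ), (x : AddCircle (∑ i : Fin N, Φ i [])) ≠ y := by
    intro y hy h
    apply hz
    rw [h]
    exact image_closure_subset_closure_image (AddCircle.continuous_mk' _) ⟨y, hy, rfl⟩
  obtain ⟨p, hp1, hp2⟩ := exists_path hN hharm x hx0 hx1.le
  by_cases hr : RationalPath p
  swap
  · exact absurd rfl (hcl x (subset_closure ⟨p, hr, hp1, hp2⟩))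
  obtain ⟨r, hr⟩ := rat_cases hN p hr
  refine ⟨r, ?_⟩
  rw [regionInterval_eq hN hpos hharm]
  have hg := reg_glue hN hpos hharm r
  have hA := hcl _ (AA_mem_closure hpos hharm (regL r) (regL_frq r))
  have hB := hcl _ (BB_mem_closure hpos hharm (regR hN r) (regR_frq hN r))
  have hD := coe_regD (Φ := Φ) r
  have c1 := AA_le_BB hpos hharm (regL r)
  have c2 := AA_le_BB hpos hharm (regR hN r)
  rcases hr with rfl | rfl
  · refine ⟨x, ⟨lt_of_le_of_ne hp1 ?_, lt_of_le_of_ne (by linarith) ?_⟩, rfl⟩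
    · intro h; exact hA (by rw [h])
    · intro h; exact hB (by rw [h, AddCircle.coe_add, hD, add_zero])
  · refine ⟨x + regD Φ r, ⟨lt_of_le_of_ne (by linarith) ?_, ?_⟩, ?_⟩
    · intro h; exact hA (by rw [h, AddCircle.coe_add, hD, add_zero])
    · have : x < BB Φ (regR hN r) := lt_of_le_of_ne hp2 fun h => hB (by rw [h])
      linarith
    · simp only [AddCircle.coe_add, hD, add_zero]

end tree

/-- **Structure of the complement of `X̄_∞`.** The complement of `X̄_∞` in the circle
`ℝ/∂Φℤ` is the union, over all complementary regions (edge-labelled regions and root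
regions), of the open intervals `J_e`, and these intervals are pairwise disjoint. -/
theorem complement_XbarInf (N : ℕ) (hN : 1 ≤ N) (Φ : Fin N → List Bool → ℝ)
    (hpos : ∀ (i : Fin N) (w : List Bool), 0 < Φ i w)
    (hharm : ∀ (i : Fin N) (w : List Bool), Φ i w = Φ i (w ++ [false]) + Φ i (w ++ [true])) :
    (XbarInf Φ)ᶜ = (⋃ r : (Fin N × List Bool) ⊕ Fin N, regionInterval hN Φ r) ∧
    (∀ r r' : (Fin N × List Bool) ⊕ Fin N, r ≠ r' →
      Disjoint (regionInterval hN Φ r) (regionInterval hN Φ r')) := by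
  refine ⟨?_, ?_⟩
  · ext z
    simp only [Set.mem_compl_iff, Set.mem_iUnion]
    constructor
    · exact cover hN hpos hharm z
    · rintro ⟨r, hr⟩
      exact Set.disjoint_left.1 (reg_sub hN hpos hharm r) hr
  · intro r r' hne
    rcases trichotomy (regL r) (regL r') with h | h | h
    · exact absurd (regL_inj h) hne
    · exact disj_aux hN hpos hharm r r' h
    · exact (disj_aux hN hpos hharm r' r h).symm
end
end
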